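/- Under the Pólya urn hypotheses, assume sup_n ‖X_{n+1} − X_n‖_p < ∞ for every p ≥ 2, that Re λ₂ < b/2 (where λ₂ is a second-largest eigenvalue of A in real part, λ₁ = b being the largest), and that (X_n − E X_n)/√n converges in distribution as n → ∞ to the centered Gaussian law N(0, Σ) on ℝ^q for some covariance matrix Σ. Then the convergence holds with convergence of all moments: for every real r ≥ 1, E|(X_n − E X_n)/√n|^r → E|Z|^r, and for every multi-index α ∈ ℕ^q, E[∏_{j=1}^q ((X_{n,j} − E X_{n,j})/√n)^{α_j}] → E[∏_{j=1}^q Z_j^{α_j}], where Z ~ N(0, Σ). In particular, the covariance matrices satisfy Cov(X_n)/n → Σ entrywise. -/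

import Mathlib

open MeasureTheory Matrix Filter

/-- `P` is the spectral projection of `A` for the eigenvalue `lam`: it is the identity
on the generalized eigenspace E_lam = ker((A − lam I)^q) and vanishes on the generalized
eigenspace E_mu = ker((A − mu I)^q) of every other eigenvalue `mu`. Since ℂ^q is the
direct sum of the generalized eigenspaces, these conditions determine `P` uniquely. -/
def IsSpectralProj {q : ℕ} (A : Matrix (Fin q) (Fin q) ℂ) (lam : ℂ)
    (P : Matrix (Fin q) (Fin q) ℂ) : Prop :=
  (∀ v : Fin q → ℂ, ((A - lam • 1) ^ q).mulVec v = 0 → P.mulVec v = v) ∧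
  ∀ mu : ℂ, mu ≠ lam → ∀ v : Fin q → ℂ, ((A - mu • 1) ^ q).mulVec v = 0 → P.mulVec v = 0

/-- `ν` is the nilpotency index ν_lam of N_lam := (A − lam I) P_lam, i.e. the unique
integer ν ≥ 0 with N_lam^(ν+1) = 0 and (ν = 0 or N_lam^ν ≠ 0). -/
def NilIndexOf {q : ℕ} (A : Matrix (Fin q) (Fin q) ℂ) (lam : ℂ)
    (P : Matrix (Fin q) (Fin q) ℂ) (ν : ℕ) : Prop :=
  ((A - lam • 1) * P) ^ (ν + 1) = 0 ∧ (ν = 0 ∨ ((A - lam • 1) * P) ^ ν ≠ 0)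

/-- `mu` is a candidate for the second eigenvalue λ₂ in the ordered listing
λ₁, λ₂, …, λ_q of the eigenvalues of `Ac` with algebraic multiplicity (λ₁ = b being
first): either `mu` is an eigenvalue different from b, or `mu = b` and b occurs with
algebraic multiplicity at least 2. -/
def MemSecondEigSet {q : ℕ} (Ac : Matrix (Fin q) (Fin q) ℂ) (b : ℝ) (mu : ℂ) : Prop :=
  (mu ≠ (b : ℂ) ∧ mu ∈ spectrum ℂ Ac) ∨
  (mu = (b : ℂ) ∧ 2 ≤ Polynomial.rootMultiplicity (b : ℂ) (Matrix.charpoly Ac))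

/-! Pick `v` with `a ⬝ᵥ v = b` and deflate `A` to `B = A - v aᵀ`. The centred process `Y` lives in
`ker aᵀ`, where `A` and `B` agree, and every eigenvalue of `B` has real part less than `b / 2`.
Hence for some `β < b / 2` there is a Hilbert norm in which `1 + s B` expands by a factor at most
`1 + s β` for all small `s ≥ 0`. In `L^p` with `p` an even integer, adding a martingale difference
`D` to `P` raises `‖P‖_p ^ 2` by at most `C ‖D‖_p ^ 2`, so `u n = ‖Y n‖_p ^ 2` satisfies
`u (n + 1) ≤ (1 + β / (w + n b)) ^ 2 * u n + C'`. As `2 β < b`, the homogeneous growth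
`n ^ (2 β / b)` is sublinear and `u n = O(n)`: all moments of `Y n / √n` stay bounded, which
upgrades weak convergence to convergence of moments. -/

open Polynomial ProbabilityTheory
open scoped InnerProductSpace

section Deflation

variable {ι : Type*} [Fintype ι] [DecidableEq ι]

theorem X_sub_C_mul_charpoly_sub_vecMulVec {K : Type*} [Field K] [Infinite K]
    (A : Matrix ι ι K) (a v : ι → K) (b : K) (hA : a ᵥ* A = b • a) :
    (X - C b) * (A - vecMulVec v a).charpoly = (X - C (b - a ⬝ᵥ v)) * A.charpoly := by
  refine eq_of_infinite_eval_eq _ _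
    (Set.Infinite.mono (s := {b}ᶜ) (fun t ht => ?_) (Set.finite_singleton b).infinite_compl)
  have htb : t - b ≠ 0 := sub_ne_zero.2 (by simpa using ht)
  have left_eigenvector : a ᵥ* (scalar ι t - A) = (t - b) • a := by
    rw [vecMul_sub, hA, sub_smul, scalar_apply, vecMul_diagonal_const, op_smul_eq_smul]
  have factorization : scalar ι t - (A - vecMulVec v a) =
      (1 + vecMulVec ((t - b)⁻¹ • v) a) * (scalar ι t - A) := by
    rw [add_mul, one_mul, vecMulVec_mul, left_eigenvector, smul_vecMulVec, vecMulVec_smul,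
      inv_smul_smul₀ htb]
    abel
  simp only [Set.mem_ofPred_eq, eval_mul, eval_sub, eval_X, eval_C, eval_charpoly, factorization,
    det_mul]
  rw [vecMulVec_eq Unit, det_one_add_replicateCol_mul_replicateRow, dotProduct_smul, smul_eq_mul]
  field_simp
  ring

theorem eq_zero_or_mem_spectrum_or_two_le_rootMultiplicity
    {K : Type*} [Field K] [Infinite K] {A : Matrix ι ι K} {a v : ι → K} {b z : K} (hb : b ≠ 0)
    (hA : a ᵥ* A = b • a) (hav : a ⬝ᵥ v = b) (hz : z ∈ spectrum K (A - vecMulVec v a)) :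
    z = 0 ∨ (z ≠ b ∧ z ∈ spectrum K A) ∨ (z = b ∧ 2 ≤ A.charpoly.rootMultiplicity b) := by
  have key := X_sub_C_mul_charpoly_sub_vecMulVec A a v b hA
  rw [hav, sub_self, C_0, sub_zero] at key
  rw [mem_spectrum_iff_isRoot_charpoly] at hz ⊢
  rcases eq_or_ne z b with rfl | hzb
  · refine .inr (.inr ⟨rfl, (le_rootMultiplicity_iff (charpoly_monic A).ne_zero).2 ?_⟩)
    have sq_dvd : (X - C z) ^ 2 ∣ X * A.charpoly := by
      rw [← key, pow_two]
      exact mul_dvd_mul_left _ (dvd_iff_isRoot.2 hz)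
    have coprime : IsCoprime (X - C z) X := by
      simpa using isCoprime_X_sub_C_of_isUnit_sub (a := z) (b := 0) (by simpa using hb)
    exact coprime.pow_left.dvd_of_dvd_mul_left sq_dvd
  · have eval_eq := congrArg (eval z) key
    rw [eval_mul, hz.eq_zero, mul_zero, eval_mul, eval_X] at eval_eq
    exact (mul_eq_zero.1 eval_eq.symm).imp_right fun h => .inl ⟨hzb, h⟩

end Deflation

section SpectralBound

theorem norm_one_add_le_one_add_re_add_sq (z : ℂ) : ‖1 + z‖ ≤ 1 + z.re + ‖z‖ ^ 2 / 2 := by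
  have sq_norm_one_add : ‖1 + z‖ ^ 2 = 1 + 2 * z.re + ‖z‖ ^ 2 := by
    simp only [Complex.sq_norm, Complex.normSq_apply, Complex.add_re, Complex.add_im,
      Complex.one_re, Complex.one_im]
    ring
  have re_sq_le : z.re ^ 2 ≤ ‖z‖ ^ 2 := sq_le_sq.2 (by simpa using Complex.abs_re_le_norm z)
  refine le_of_sq_le_sq ?_ (by nlinarith [re_sq_le])
  nlinarith [sq_nonneg (z.re + ‖z‖ ^ 2 / 2)]

variable {𝔸 : Type*} [NormedRing 𝔸] [NormedAlgebra ℂ 𝔸] [CompleteSpace 𝔸] [Nontrivial 𝔸]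

theorem exists_norm_pow_le_of_forall_spectrum_norm_lt (a : 𝔸) {R : ℝ}
    (ha : ∀ z ∈ spectrum ℂ a, ‖z‖ < R) : ∃ N : ℕ, 0 < N ∧ ‖a ^ N‖ ≤ R ^ N := by
  obtain ⟨z, hz⟩ := spectrum.nonempty a
  lift R to NNReal using (norm_nonneg z).trans (ha z hz).le
  obtain ⟨N, hNR, hN⟩ :=
    (((spectrum.pow_nnnorm_pow_one_div_tendsto_nhds_spectralRadius a).eventually
      (gt_mem_nhds (spectrum.spectralRadius_lt_of_forall_lt a ha))).and
      (eventually_gt_atTop 0)).exists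
  rw [one_div, ENNReal.rpow_inv_lt_iff (by positivity), ENNReal.rpow_natCast] at hNR
  exact ⟨N, hN, mod_cast hNR.le⟩

theorem exists_norm_one_add_smul_pow_le (a : 𝔸) {c : ℝ} (hc : 0 < c)
    (ha : ∀ z ∈ spectrum ℂ a, z.re < c) :
    ∃ δ : ℝ, 0 < δ ∧ ∃ β : ℝ, 0 ≤ β ∧ β < c ∧ ∃ N : ℕ, 0 < N ∧
      ‖(1 + (δ : ℂ) • a) ^ N‖ ≤ (1 + δ * β) ^ N := by
  have hK : IsCompact (spectrum ℂ a) := spectrum.isCompact a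
  obtain ⟨z₀, hz₀, hmax⟩ :=
    hK.exists_isMaxOn (spectrum.nonempty a) Complex.continuous_re.continuousOn
  obtain ⟨L, hL⟩ := hK.exists_bound_of_continuousOn continuousOn_id
  obtain ⟨β, hβ, hβc⟩ := exists_between (max_lt (ha z₀ hz₀) hc)
  have hβz₀ : 0 < β - z₀.re := sub_pos.2 ((le_max_left _ _).trans_lt hβ)
  have hβ_nonneg : 0 ≤ β := (le_max_right _ _).trans hβ.le
  obtain ⟨δ, hδ, hδL⟩ : ∃ δ : ℝ, 0 < δ ∧ δ * (L ^ 2 + 1) = β - z₀.re :=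
    ⟨(β - z₀.re) / (L ^ 2 + 1), by positivity, div_mul_cancel₀ _ (by positivity)⟩
  have norm_lt : ∀ z ∈ spectrum ℂ (1 + (δ : ℂ) • a), ‖z‖ < 1 + δ * β := by
    rw [← map_one (algebraMap ℂ 𝔸), ← spectrum.singleton_add_eq,
      spectrum.smul_eq_smul _ _ (spectrum.nonempty a), Set.singleton_add]
    rintro _ ⟨_, ⟨z, hz, rfl⟩, rfl⟩
    have re_le : z.re ≤ z₀.re := hmax hz
    have sq_le : ‖z‖ ^ 2 ≤ L ^ 2 := by gcongr; exact hL z hz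
    calc ‖1 + (δ : ℂ) • z‖ ≤ 1 + δ * z.re + δ ^ 2 * ‖z‖ ^ 2 / 2 := by
          simpa [mul_pow, hδ.le] using norm_one_add_le_one_add_re_add_sq ((δ : ℂ) • z)
      _ ≤ 1 + δ * z₀.re + δ ^ 2 * L ^ 2 / 2 := by gcongr
      _ < 1 + δ * β := by nlinarith
  exact ⟨δ, hδ, β, hβ_nonneg, hβc, exists_norm_pow_le_of_forall_spectrum_norm_lt _ norm_lt⟩

end SpectralBound

section AdaptedNorm

variable {E : Type*} [NormedAddCommGroup E] [NormedSpace ℝ E]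

/-- The map `x ↦ (R⁻ᵏ Tᵏ x)_{k < N}` into an `ℓ²` sum of copies of `E`. The norm of its target pulls
back to a norm on `E`, Hilbert whenever `E` is, for which `T` has operator norm at most `R` as soon
as `‖T ^ N‖ ≤ R ^ N`. -/
noncomputable def adaptedEmbedding (T : E →L[ℝ] E) (R : ℝ) (N : ℕ) :
    E →L[ℝ] PiLp 2 fun _ : Fin N => E :=
  (PiLp.continuousLinearEquiv 2 ℝ fun _ : Fin N => E).symm.toContinuousLinearMap.comp
    (ContinuousLinearMap.pi fun k => R⁻¹ ^ (k : ℕ) • T ^ (k : ℕ))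

theorem norm_sq_adaptedEmbedding (T : E →L[ℝ] E) (R : ℝ) (N : ℕ) (x : E) :
    ‖adaptedEmbedding T R N x‖ ^ 2 = ∑ k ∈ Finset.range N, ‖R⁻¹ ^ k • (T ^ k) x‖ ^ 2 := by
  rw [PiLp.norm_sq_eq_of_L2, Finset.sum_range]
  rfl

theorem norm_le_norm_adaptedEmbedding (T : E →L[ℝ] E) (R : ℝ) {N : ℕ} (hN : 0 < N) (x : E) :
    ‖x‖ ≤ ‖adaptedEmbedding T R N x‖ := by
  refine le_of_sq_le_sq ?_ (norm_nonneg _)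
  rw [norm_sq_adaptedEmbedding]
  simpa using Finset.single_le_sum (f := fun k => ‖R⁻¹ ^ k • (T ^ k) x‖ ^ 2)
    (fun _ _ => sq_nonneg _) (Finset.mem_range.2 hN)

theorem norm_adaptedEmbedding_apply_le {T : E →L[ℝ] E} {R : ℝ} {N : ℕ} (hR : 0 < R)
    (hT : ‖T ^ N‖ ≤ R ^ N) (x : E) :
    ‖adaptedEmbedding T R N (T x)‖ ≤ R * ‖adaptedEmbedding T R N x‖ := by
  have shift (k : ℕ) : ‖R⁻¹ ^ k • (T ^ k) (T x)‖ ^ 2 =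
      R ^ 2 * ‖R⁻¹ ^ (k + 1) • (T ^ (k + 1)) x‖ ^ 2 := by
    rw [pow_succ T, mul_apply_eq_comp, ← mul_pow, ← Real.norm_of_nonneg hR.le,
      ← norm_smul, smul_smul, Real.norm_of_nonneg hR.le, pow_succ' R⁻¹, mul_inv_cancel_left₀ hR.ne']
  have last_le_first : ‖R⁻¹ ^ N • (T ^ N) x‖ ≤ ‖x‖ := by
    rw [norm_smul, norm_pow, norm_inv, Real.norm_of_nonneg hR.le, inv_pow,
      inv_mul_le_iff₀ (by positivity)]
    exact (T ^ N).le_of_opNorm_le hT x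
  refine le_of_sq_le_sq ?_ (by positivity)
  rw [mul_pow, norm_sq_adaptedEmbedding, norm_sq_adaptedEmbedding,
    Finset.sum_congr rfl fun k _ => shift k, ← Finset.mul_sum]
  gcongr R ^ 2 * ?_
  have telescope := Finset.sum_range_succ' (fun k => ‖R⁻¹ ^ k • (T ^ k) x‖ ^ 2) N
  rw [Finset.sum_range_succ] at telescope
  have := pow_le_pow_left₀ (norm_nonneg _) last_le_first 2
  simp only [pow_zero, one_smul, one_apply_eq_self] at telescope
  linarith

theorem norm_map_add_smul_le {F : Type*} [NormedAddCommGroup F] [NormedSpace ℝ F] {J : E →L[ℝ] F}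
    {L : E →L[ℝ] E} {x : E} {δ β s : ℝ} (hδ : 0 < δ)
    (hJ : ‖J ((1 + δ • L) x)‖ ≤ (1 + δ * β) * ‖J x‖) (hs : 0 ≤ s) (hsδ : s ≤ δ) :
    ‖J (x + s • L x)‖ ≤ (1 + s * β) * ‖J x‖ := by
  obtain ⟨θ, hθ, hθ1, rfl⟩ : ∃ θ, 0 ≤ θ ∧ θ ≤ 1 ∧ s = θ * δ :=
    ⟨s / δ, by positivity, (div_le_one hδ).2 hsδ, (div_mul_cancel₀ s hδ.ne').symm⟩
  have convex_comb : x + (θ * δ) • L x = (1 - θ) • x + θ • (1 + δ • L) x := by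
    simp only [_root_.add_apply, one_apply_eq_self, _root_.smul_apply]
    module
  calc ‖J (x + (θ * δ) • L x)‖ = ‖(1 - θ) • J x + θ • J ((1 + δ • L) x)‖ := by
        rw [convex_comb, map_add, map_smul, map_smul]
    _ ≤ (1 - θ) * ‖J x‖ + θ * ‖J ((1 + δ • L) x)‖ := by
        refine (norm_add_le _ _).trans_eq ?_
        rw [norm_smul, norm_smul, Real.norm_of_nonneg hθ, Real.norm_of_nonneg (sub_nonneg.2 hθ1)]
    _ ≤ (1 - θ) * ‖J x‖ + θ * ((1 + δ * β) * ‖J x‖) := by gcongr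
    _ = (1 + θ * δ * β) * ‖J x‖ := by ring

end AdaptedNorm

section RealMatrix

open scoped Matrix.Norms.L2Operator

variable {ι : Type*} [Fintype ι] [DecidableEq ι]

theorem norm_toEuclideanCLM_le_norm_map_ofReal (M : Matrix ι ι ℝ) :
    ‖toEuclideanCLM (𝕜 := ℝ) M‖ ≤ ‖M.map ((↑) : ℝ → ℂ)‖ := by
  have norm_ofReal (y : ι → ℝ) : ‖WithLp.toLp 2 fun i => (y i : ℂ)‖ = ‖WithLp.toLp 2 y‖ := by
    simp only [EuclideanSpace.norm_eq, Complex.norm_real]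
  refine ContinuousLinearMap.opNorm_le_bound _ (norm_nonneg _) fun x => ?_
  have mulVec_ofReal : (M.map ((↑) : ℝ → ℂ)) *ᵥ (fun i => (x i : ℂ)) =
      fun i => ((toEuclideanCLM (𝕜 := ℝ) M x i : ℝ) : ℂ) := by
    ext i
    simp [mulVec, dotProduct, ofLp_toEuclideanCLM]
  calc ‖toEuclideanCLM (𝕜 := ℝ) M x‖
      = ‖WithLp.toLp 2 fun i => ((toEuclideanCLM (𝕜 := ℝ) M x i : ℝ) : ℂ)‖ := (norm_ofReal _).symm
    _ ≤ ‖M.map ((↑) : ℝ → ℂ)‖ * ‖WithLp.toLp 2 fun i => (x i : ℂ)‖ := by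
        rw [← mulVec_ofReal]
        exact l2_opNorm_mulVec _ (WithLp.toLp 2 fun i => (x i : ℂ))
    _ = ‖M.map ((↑) : ℝ → ℂ)‖ * ‖x‖ := congrArg _ (norm_ofReal _)

theorem exists_embedding_norm_add_smul_toEuclideanCLM_le [Nonempty ι] (B : Matrix ι ι ℝ) {c : ℝ}
    (hc : 0 < c) (hB : ∀ z ∈ spectrum ℂ (B.map ((↑) : ℝ → ℂ)), z.re < c) :
    ∃ δ : ℝ, 0 < δ ∧ ∃ β : ℝ, 0 ≤ β ∧ β < c ∧ ∃ N : ℕ,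
      ∃ J : EuclideanSpace ℝ ι →L[ℝ] PiLp 2 fun _ : Fin N => EuclideanSpace ℝ ι,
        (∀ x, ‖x‖ ≤ ‖J x‖) ∧ ∀ s, 0 ≤ s → s ≤ δ → ∀ x,
          ‖J (x + s • toEuclideanCLM (𝕜 := ℝ) B x)‖ ≤ (1 + s * β) * ‖J x‖ := by
  obtain ⟨δ, hδ, β, hβ, hβc, N, hN, hpow⟩ := exists_norm_one_add_smul_pow_le _ hc hB
  set T := toEuclideanCLM (𝕜 := ℝ) (1 + δ • B) with hT
  have map_T : (1 + δ • B).map ((↑) : ℝ → ℂ) = 1 + (δ : ℂ) • B.map ((↑) : ℝ → ℂ) := by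
    ext i j
    simp [one_apply, apply_ite]
  have norm_T_pow : ‖T ^ N‖ ≤ (1 + δ * β) ^ N := by
    rw [hT, ← map_pow]
    refine (norm_toEuclideanCLM_le_norm_map_ofReal _).trans ?_
    rwa [show ((1 + δ • B) ^ N).map ((↑) : ℝ → ℂ) = _ from map_pow Complex.ofRealHom.mapMatrix _ N,
      show Complex.ofRealHom.mapMatrix (1 + δ • B) = _ from map_T]
  refine ⟨δ, hδ, β, hβ, hβc, N, adaptedEmbedding T (1 + δ * β) N,
    norm_le_norm_adaptedEmbedding _ _ hN, fun s hs hsδ x => norm_map_add_smul_le hδ ?_ hs hsδ⟩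
  rw [← map_smul, ← map_one (toEuclideanCLM (𝕜 := ℝ)), ← map_add]
  exact norm_adaptedEmbedding_apply_le (by positivity) norm_T_pow x

end RealMatrix

section LpSmoothness

theorem pow_succ_le_add_mul_sub_add_mul_sq {u v M : ℝ} (hu : 0 ≤ u) (hv : 0 ≤ v) (huM : u ≤ M)
    (hvM : v ≤ M) (k : ℕ) :
    v ^ (k + 1) ≤ u ^ (k + 1) + (k + 1) * u ^ k * (v - u) +
      (k + 1) * k * M ^ (k - 1) * (v - u) ^ 2 := by
  have tangent := pow_add_mul_le_add_pow hv (b := u - v) (by linarith) (k + 1)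
  simp only [add_sub_cancel, add_tsub_cancel_right, Nat.cast_add, Nat.cast_one] at tangent
  have slope : (v ^ k - u ^ k) * (v - u) ≤ k * M ^ (k - 1) * (v - u) ^ 2 := by
    calc (v ^ k - u ^ k) * (v - u) ≤ |v ^ k - u ^ k| * |v - u| := by
          rw [← abs_mul]
          exact le_abs_self _
      _ ≤ |v - u| * k * M ^ (k - 1) * |v - u| := by
          gcongr
          refine (abs_pow_sub_pow_le v u k).trans ?_
          rw [abs_of_nonneg hv, abs_of_nonneg hu]
          gcongr
          exact max_le hvM huM
      _ = k * M ^ (k - 1) * (v - u) ^ 2 := by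
          rw [← sq_abs (v - u)]
          ring
  have := mul_le_mul_of_nonneg_left slope (by positivity : (0 : ℝ) ≤ k + 1)
  linarith

variable {E F : Type*} [NormedAddCommGroup E] [NormedAddCommGroup F]

theorem abs_norm_add_sq_sub_norm_sq_le (x y : E) :
    |‖x + y‖ ^ 2 - ‖x‖ ^ 2| ≤ 2 * (‖x‖ + ‖y‖) * ‖y‖ := by
  rw [sq_sub_sq, abs_mul, abs_of_nonneg (by positivity)]
  gcongr
  · linarith [norm_add_le x y, norm_nonneg y]
  · simpa using abs_norm_sub_norm_le (x + y) x

theorem norm_add_pow_le_taylor [InnerProductSpace ℝ E] (x y : E) (k : ℕ) :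
    ‖x + y‖ ^ (2 * (k + 1)) ≤ ‖x‖ ^ (2 * (k + 1)) + 2 * (k + 1) * ⟪‖x‖ ^ (2 * k) • x, y⟫_ℝ +
      4 * (k + 1) ^ 2 * ((‖x‖ + ‖y‖) ^ (2 * k) * ‖y‖ ^ 2) := by
  set M := (‖x‖ + ‖y‖) ^ 2 with hM
  set h := ‖x + y‖ ^ 2 - ‖x‖ ^ 2 with hh
  have hxM : ‖x‖ ^ 2 ≤ M := by
    rw [hM]
    gcongr
    exact le_add_of_nonneg_right (norm_nonneg y)
  have hxyM : ‖x + y‖ ^ 2 ≤ M := by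
    rw [hM]
    gcongr
    exact norm_add_le x y
  have h_eq : h = 2 * ⟪x, y⟫_ℝ + ‖y‖ ^ 2 := by
    rw [hh, norm_add_sq_real]
    ring
  have sq_le : h ^ 2 ≤ 4 * M * ‖y‖ ^ 2 := by
    rw [← sq_abs]
    refine (pow_le_pow_left₀ (abs_nonneg _) (abs_norm_add_sq_sub_norm_sq_le x y) 2).trans_eq ?_
    rw [hM]
    ring
  have curvature : k * M ^ (k - 1) * h ^ 2 ≤ 4 * k * (M ^ k * ‖y‖ ^ 2) := by
    rcases k with _ | k
    · simp
    · rw [add_tsub_cancel_right]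
      refine (mul_le_mul_of_nonneg_left sq_le (by positivity)).trans_eq ?_
      push_cast
      ring
  have slope : (‖x‖ ^ 2) ^ k * ‖y‖ ^ 2 ≤ M ^ k * ‖y‖ ^ 2 := by gcongr
  have taylor := pow_succ_le_add_mul_sub_add_mul_sq (sq_nonneg _) (sq_nonneg _) hxM hxyM k
  rw [← hh] at taylor
  rw [real_inner_smul_left, pow_mul, pow_mul, pow_mul, pow_mul, ← hM]
  calc _ ≤ (‖x‖ ^ 2) ^ (k + 1) + 2 * (k + 1) * ((‖x‖ ^ 2) ^ k * ⟪x, y⟫_ℝ) +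
        (k + 1) * ((‖x‖ ^ 2) ^ k * ‖y‖ ^ 2 + k * M ^ (k - 1) * h ^ 2) := by
        refine taylor.trans_eq ?_
        nth_rw 1 [h_eq]
        ring
    _ ≤ (‖x‖ ^ 2) ^ (k + 1) + 2 * (k + 1) * ((‖x‖ ^ 2) ^ k * ⟪x, y⟫_ℝ) +
        (k + 1) * (4 * (k + 1) * (M ^ k * ‖y‖ ^ 2)) := by
        gcongr
        have : 0 ≤ M ^ k * ‖y‖ ^ 2 := by positivity
        linarith
    _ = _ := by ring

variable {Ω : Type*} {m0 : MeasurableSpace Ω} {μ : Measure Ω}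

theorem eLpNorm_natCast_pow {p : ℕ} (hp : p ≠ 0) (f : Ω → E) :
    eLpNorm f p μ ^ p = ∫⁻ ω, ‖f ω‖ₑ ^ p ∂μ := by
  simpa using eLpNorm_nnreal_pow_eq_lintegral (f := f) (μ := μ) (p := p) (mod_cast hp)

theorem lpNorm_natCast_pow {f : Ω → E} {p : ℕ} (hp : p ≠ 0) (hf : AEStronglyMeasurable f μ) :
    lpNorm f p μ ^ p = ∫ ω, ‖f ω‖ ^ p ∂μ := by
  rw [lpNorm_eq_integral_norm_rpow_toReal (mod_cast hp) (by simp) hf]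
  simp only [ENNReal.toReal_natCast, Real.rpow_natCast]
  exact Real.rpow_inv_natCast_pow (by positivity) hp

theorem lpNorm_le_mul_lpNorm_of_ae_le_mul {f : Ω → E} {g : Ω → F} {p : ENNReal} {c : ℝ}
    (hc : 0 ≤ c) (hf : AEStronglyMeasurable f μ) (hg : MemLp g p μ)
    (h : ∀ᵐ ω ∂μ, ‖f ω‖ ≤ c * ‖g ω‖) : lpNorm f p μ ≤ c * lpNorm g p μ := by
  rw [← toReal_eLpNorm hf, ← toReal_eLpNorm hg.1, ← ENNReal.toReal_ofReal hc,
    ← ENNReal.toReal_mul]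
  exact ENNReal.toReal_mono (ENNReal.mul_ne_top ENNReal.ofReal_ne_top hg.2.ne)
    (eLpNorm_le_mul_eLpNorm_of_ae_le_mul h p)

theorem integrable_norm_pow_mul_norm_pow {f : Ω → E} {g : Ω → F} {m n : ℕ} (hmn : m + n ≠ 0)
    (hf : MemLp f (m + n : ℕ) μ) (hg : MemLp g (m + n : ℕ) μ) :
    Integrable (fun ω => ‖f ω‖ ^ m * ‖g ω‖ ^ n) μ := by
  refine ((hf.norm.add hg.norm).integrable_norm_pow hmn).mono'
    ((hf.1.norm.pow m).mul (hg.1.norm.pow n)) (.of_forall fun ω => ?_)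
  rw [Real.norm_of_nonneg (by positivity), Pi.add_apply, Real.norm_of_nonneg (by positivity),
    pow_add]
  gcongr
  · exact le_add_of_nonneg_right (norm_nonneg _)
  · exact le_add_of_nonneg_left (norm_nonneg _)

theorem integral_norm_pow_mul_norm_pow_le {f : Ω → E} {g : Ω → F} {m n : ℕ} (hmn : m + n ≠ 0)
    (hf : MemLp f (m + n : ℕ) μ) (hg : MemLp g (m + n : ℕ) μ) :
    ∫ ω, ‖f ω‖ ^ m * ‖g ω‖ ^ n ∂μ ≤
      lpNorm f (m + n : ℕ) μ ^ m * lpNorm g (m + n : ℕ) μ ^ n := by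
  have root {a : ENNReal} (l : ℕ) : (a ^ (m + n)) ^ ((l : ℝ) / (m + n : ℕ)) = a ^ l := by
    rw [← ENNReal.rpow_natCast, ← ENNReal.rpow_mul, mul_div_cancel₀ _ (mod_cast hmn),
      ENNReal.rpow_natCast]
  have holder := ENNReal.lintegral_mul_norm_pow_le (hf.1.enorm.pow_const (m + n))
    (hg.1.enorm.pow_const (m + n)) (p := m / (m + n : ℕ)) (q := n / (m + n : ℕ))
    (by positivity) (by positivity) (by field_simp; push_cast; ring)
  simp only [root, ← eLpNorm_natCast_pow hmn] at holder
  rw [integral_eq_lintegral_of_nonneg_ae (.of_forall fun _ => by positivity)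
    (integrable_norm_pow_mul_norm_pow hmn hf hg).1, ← toReal_eLpNorm hf.1, ← toReal_eLpNorm hg.1,
    ← ENNReal.toReal_pow, ← ENNReal.toReal_pow, ← ENNReal.toReal_mul]
  refine ENNReal.toReal_mono (by finiteness [hf.2.ne, hg.2.ne]) (le_of_eq_of_le ?_ holder)
  refine lintegral_congr fun ω => ?_
  rw [ENNReal.ofReal_mul (by positivity), ENNReal.ofReal_pow (norm_nonneg _),
    ENNReal.ofReal_pow (norm_nonneg _), ofReal_norm, ofReal_norm]

theorem integral_norm_add_norm_pow_mul_norm_pow_le {f : Ω → E} {g : Ω → F} {m n : ℕ}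
    (hmn : m + n ≠ 0) (hf : MemLp f (m + n : ℕ) μ) (hg : MemLp g (m + n : ℕ) μ) :
    ∫ ω, (‖f ω‖ + ‖g ω‖) ^ m * ‖g ω‖ ^ n ∂μ ≤
      (lpNorm f (m + n : ℕ) μ + lpNorm g (m + n : ℕ) μ) ^ m * lpNorm g (m + n : ℕ) μ ^ n := by
  have holder := integral_norm_pow_mul_norm_pow_le hmn (hf.norm.add hg.norm) hg
  have minkowski := lpNorm_add_le hf.norm (g := fun ω => ‖g ω‖)
    (mod_cast Nat.one_le_iff_ne_zero.2 hmn)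
  rw [lpNorm_norm hf.1, lpNorm_norm hg.1] at minkowski
  simp only [Pi.add_apply, Real.norm_of_nonneg (add_nonneg (norm_nonneg _) (norm_nonneg _))]
    at holder
  exact holder.trans (mul_le_mul_of_nonneg_right (pow_le_pow_left₀ lpNorm_nonneg minkowski m)
    (pow_nonneg lpNorm_nonneg n))

theorem integral_inner_eq_zero_of_condExp_eq_zero [InnerProductSpace ℝ E] [CompleteSpace E]
    {m : MeasurableSpace Ω} (hm : m ≤ m0) [SigmaFinite (μ.trim hm)] {f D : Ω → E}
    (hf : StronglyMeasurable[m] f) (hD : Integrable D μ)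
    (hfD : Integrable (fun ω => ⟪f ω, D ω⟫_ℝ) μ) (hD0 : μ[D | m] =ᵐ[μ] 0) :
    ∫ ω, ⟪f ω, D ω⟫_ℝ ∂μ = 0 := by
  have pull_out := condExp_bilin_of_stronglyMeasurable_left (innerSL ℝ) hf hfD hD
  rw [← integral_condExp hm]
  refine integral_eq_zero_of_ae (pull_out.trans ?_)
  filter_upwards [hD0] with ω hω
  simp [hω]

theorem integrable_inner_norm_pow_smul [InnerProductSpace ℝ E] {f g : Ω → E} {n : ℕ}
    (hf : MemLp f (n + 2 : ℕ) μ) (hg : MemLp g (n + 2 : ℕ) μ) :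
    Integrable (fun ω => ⟪‖f ω‖ ^ n • f ω, g ω⟫_ℝ) μ := by
  refine (integrable_norm_pow_mul_norm_pow (m := n + 1) (n := 1) (by omega) hf hg).mono'
    (((hf.1.norm.pow n).smul hf.1).inner hg.1) (.of_forall fun ω => ?_)
  refine (norm_inner_le_norm _ _).trans_eq ?_
  simp [norm_smul, pow_succ]

theorem lpNorm_add_pow_le_of_condExp_eq_zero [InnerProductSpace ℝ E] [CompleteSpace E]
    [IsFiniteMeasure μ] {m : MeasurableSpace Ω} (hm : m ≤ m0) {P D : Ω → E} (k : ℕ)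
    (hP : StronglyMeasurable[m] P) (hPp : MemLp P (2 * (k + 1) : ℕ) μ)
    (hDp : MemLp D (2 * (k + 1) : ℕ) μ) (hD0 : μ[D | m] =ᵐ[μ] 0) :
    lpNorm (P + D) (2 * (k + 1) : ℕ) μ ^ (2 * (k + 1)) ≤
      lpNorm P (2 * (k + 1) : ℕ) μ ^ (2 * (k + 1)) + 4 * (k + 1) ^ 2 *
        ((lpNorm P (2 * (k + 1) : ℕ) μ + lpNorm D (2 * (k + 1) : ℕ) μ) ^ (2 * k) *
          lpNorm D (2 * (k + 1) : ℕ) μ ^ 2) := by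
  set p := 2 * (k + 1)
  have hp0 : p ≠ 0 := by omega
  have hp1 : 1 ≤ (p : ENNReal) := mod_cast Nat.one_le_iff_ne_zero.2 hp0
  have inner_integrable : Integrable (fun ω => ⟪‖P ω‖ ^ (2 * k) • P ω, D ω⟫_ℝ) μ :=
    integrable_inner_norm_pow_smul (n := 2 * k) hPp hDp
  have inner_integral : ∫ ω, ⟪‖P ω‖ ^ (2 * k) • P ω, D ω⟫_ℝ ∂μ = 0 :=
    integral_inner_eq_zero_of_condExp_eq_zero hm ((hP.norm.pow (2 * k)).smul hP)
      (hDp.integrable hp1) inner_integrable hD0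
  have remainder_integrable :
      Integrable (fun ω => (‖P ω‖ + ‖D ω‖) ^ (2 * k) * ‖D ω‖ ^ 2) μ := by
    simpa only [Real.norm_of_nonneg (add_nonneg (norm_nonneg _) (norm_nonneg _))] using
      integrable_norm_pow_mul_norm_pow (f := fun ω => ‖P ω‖ + ‖D ω‖) (m := 2 * k) (n := 2) hp0
        (hPp.norm.add hDp.norm) hDp
  have main_integrable : Integrable
      (fun ω => ‖P ω‖ ^ p + 2 * (k + 1) * ⟪‖P ω‖ ^ (2 * k) • P ω, D ω⟫_ℝ) μ :=
    (hPp.integrable_norm_pow hp0).add (inner_integrable.const_mul _)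
  rw [lpNorm_natCast_pow hp0 (hPp.add hDp).1, lpNorm_natCast_pow hp0 hPp.1]
  calc ∫ ω, ‖P ω + D ω‖ ^ p ∂μ
      ≤ ∫ ω, (‖P ω‖ ^ p + 2 * (k + 1) * ⟪‖P ω‖ ^ (2 * k) • P ω, D ω⟫_ℝ +
          4 * (k + 1) ^ 2 * ((‖P ω‖ + ‖D ω‖) ^ (2 * k) * ‖D ω‖ ^ 2)) ∂μ :=
        integral_mono ((hPp.add hDp).integrable_norm_pow hp0)
          (main_integrable.add (remainder_integrable.const_mul _))
          fun ω => norm_add_pow_le_taylor (P ω) (D ω) k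
    _ = ∫ ω, ‖P ω‖ ^ p ∂μ + 4 * (k + 1) ^ 2 *
          ∫ ω, (‖P ω‖ + ‖D ω‖) ^ (2 * k) * ‖D ω‖ ^ 2 ∂μ := by
        rw [integral_add main_integrable (remainder_integrable.const_mul _),
          integral_add (hPp.integrable_norm_pow hp0) (inner_integrable.const_mul _),
          integral_const_mul, integral_const_mul, inner_integral, mul_zero, add_zero]
    _ ≤ _ := by
        gcongr
        exact integral_norm_add_norm_pow_mul_norm_pow_le (n := 2) hp0 hPp hDp

theorem sq_le_add_mul_sq_of_pow_le {s a c d : ℝ} {k : ℕ} (hc : 1 ≤ c)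
    (h : s ^ (2 * (k + 1)) ≤ a ^ (2 * (k + 1)) + c * ((a + d) ^ (2 * k) * d ^ 2)) :
    s ^ 2 ≤ a ^ 2 + c * 2 ^ k * d ^ 2 := by
  set e := c * 2 ^ k * d ^ 2 with he
  have hc2 : 1 ≤ c * 2 ^ k := one_le_mul_of_one_le_of_one_le hc (one_le_pow₀ one_le_two)
  have hde : d ^ 2 ≤ e := le_mul_of_one_le_left (sq_nonneg d) hc2
  have sq_add_le : (a + d) ^ 2 ≤ 2 * (a ^ 2 + e) := add_sq_le.trans (by gcongr)
  refine le_of_pow_le_pow_left₀ (n := k + 1) (by omega) (by positivity) ?_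
  calc (s ^ 2) ^ (k + 1) ≤ (a ^ 2) ^ (k + 1) + c * (((a + d) ^ 2) ^ k * d ^ 2) := by
        simpa only [pow_mul] using h
    _ ≤ (a ^ 2) ^ k * a ^ 2 + c * ((2 * (a ^ 2 + e)) ^ k * d ^ 2) := by
        rw [pow_succ]
        gcongr
    _ = (a ^ 2) ^ k * a ^ 2 + (a ^ 2 + e) ^ k * e := by
        rw [he, mul_pow]
        ring
    _ ≤ (a ^ 2 + e) ^ k * a ^ 2 + (a ^ 2 + e) ^ k * e := by
        gcongr
        exact le_add_of_nonneg_right (by positivity)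
    _ = (a ^ 2 + e) ^ (k + 1) := by ring

theorem lpNorm_add_sq_le_of_condExp_eq_zero [InnerProductSpace ℝ E] [CompleteSpace E]
    [IsFiniteMeasure μ] {m : MeasurableSpace Ω} (hm : m ≤ m0) {P D : Ω → E} (k : ℕ)
    (hP : StronglyMeasurable[m] P) (hPp : MemLp P (2 * (k + 1) : ℕ) μ)
    (hDp : MemLp D (2 * (k + 1) : ℕ) μ) (hD0 : μ[D | m] =ᵐ[μ] 0) :
    lpNorm (P + D) (2 * (k + 1) : ℕ) μ ^ 2 ≤
      lpNorm P (2 * (k + 1) : ℕ) μ ^ 2 +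
        4 * (k + 1) ^ 2 * 2 ^ k * lpNorm D (2 * (k + 1) : ℕ) μ ^ 2 :=
  sq_le_add_mul_sq_of_pow_le (by nlinarith [k.cast_nonneg (α := ℝ)])
    (lpNorm_add_pow_le_of_condExp_eq_zero hm k hP hPp hDp hD0)

end LpSmoothness

section CondExp

variable {Ω E : Type*} {m m0 : MeasurableSpace Ω} {μ : Measure Ω} [IsFiniteMeasure μ]
  [NormedAddCommGroup E]

theorem condExp_sub_condExp_eq_zero [NormedSpace ℝ E] [CompleteSpace E] (hm : m ≤ m0) {f : Ω → E}
    (hf : Integrable f μ) : μ[f - μ[f | m] | m] =ᵐ[μ] 0 := by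
  refine (condExp_sub hf integrable_condExp m).trans ?_
  rw [condExp_of_stronglyMeasurable hm stronglyMeasurable_condExp integrable_condExp, sub_self]

theorem lpNorm_sub_condExp_le [NormedSpace ℝ E] [CompleteSpace E] (hm : m ≤ m0)
    {f g : Ω → E} {p : ENNReal} (hp : 1 ≤ p) (hf : MemLp f p μ) (hg : MemLp g p μ)
    (hgm : StronglyMeasurable[m] g) :
    lpNorm (f - μ[f | m]) p μ ≤ 2 * lpNorm (f - g) p μ := by
  have hfg : MemLp (f - g) p μ := hf.sub hg
  have recentre : f - μ[f | m] =ᵐ[μ] (f - g) - μ[f - g | m] := by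
    filter_upwards [condExp_sub (hf.integrable hp) (hg.integrable hp) m] with ω hω
    rw [condExp_of_stronglyMeasurable hm hgm (hg.integrable hp)] at hω
    simp [hω]
  calc lpNorm (f - μ[f | m]) p μ ≤ 1 * lpNorm ((f - g) - μ[f - g | m]) p μ :=
        lpNorm_le_mul_lpNorm_of_ae_le_mul zero_le_one (hf.sub (hf.condExp hp)).1
          (hfg.sub (hfg.condExp hp)) (recentre.mono fun ω hω => by rw [hω, one_mul])
    _ ≤ lpNorm (f - g) p μ + lpNorm (μ[f - g | m]) p μ := by
        rw [one_mul]
        exact lpNorm_sub_le hfg hp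
    _ ≤ 2 * lpNorm (f - g) p μ := by
        linarith [hfg.lpNorm_condExp_le_lpNorm (m := m) hp]

theorem lpNorm_sq_le_lpNorm_condExp_sq_add [InnerProductSpace ℝ E] [CompleteSpace E]
    (hm : m ≤ m0) {f g : Ω → E} (k : ℕ) (hf : MemLp f (2 * (k + 1) : ℕ) μ)
    (hg : MemLp g (2 * (k + 1) : ℕ) μ) (hgm : StronglyMeasurable[m] g) :
    lpNorm f (2 * (k + 1) : ℕ) μ ^ 2 ≤
      lpNorm (μ[f | m]) (2 * (k + 1) : ℕ) μ ^ 2 +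
        16 * (k + 1) ^ 2 * 2 ^ k * lpNorm (f - g) (2 * (k + 1) : ℕ) μ ^ 2 := by
  have hp : 1 ≤ ((2 * (k + 1) : ℕ) : ENNReal) := mod_cast (by omega)
  have two_smooth := lpNorm_add_sq_le_of_condExp_eq_zero hm k stronglyMeasurable_condExp
    (hf.condExp hp) (hf.sub (hf.condExp hp)) (condExp_sub_condExp_eq_zero hm (hf.integrable hp))
  rw [add_sub_cancel] at two_smooth
  calc _ ≤ _ := two_smooth
    _ ≤ lpNorm (μ[f | m]) (2 * (k + 1) : ℕ) μ ^ 2 +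
        4 * (k + 1) ^ 2 * 2 ^ k * (2 * lpNorm (f - g) (2 * (k + 1) : ℕ) μ) ^ 2 := by
        gcongr
        · exact lpNorm_nonneg
        · exact lpNorm_sub_condExp_le hm hp hf hg hgm
    _ = _ := by ring

end CondExp

section Growth

theorem tendsto_add_natCast_mul_atTop (w : ℝ) {b : ℝ} (hb : 0 < b) :
    Tendsto (fun n : ℕ => w + n * b) atTop atTop :=
  tendsto_atTop_add_const_left _ w (tendsto_natCast_atTop_atTop.atTop_mul_const hb)

theorem isBigO_natCast_of_le_one_add_inv_mul_sq_mul_add {v : ℕ → ℝ} {w b β C : ℝ} (hb : 0 < b)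
    (hβ : 2 * β < b) (hv : ∀ n, 0 ≤ v n)
    (h : ∀ᶠ n : ℕ in atTop, v (n + 1) ≤ (1 + (w + n * b)⁻¹ * β) ^ 2 * v n + C) :
    v =O[atTop] fun n => (n : ℝ) := by
  have hγ : 0 < b - 2 * β := sub_pos.2 hβ
  have t_tendsto := tendsto_add_natCast_mul_atTop w hb
  obtain ⟨N, hN⟩ := eventually_atTop.1 <| h.and <| (t_tendsto.eventually_gt_atTop 0).and <|
    t_tendsto.eventually_ge_atTop (2 * β ^ 2 / (b - 2 * β))
  set K := max (v N / (w + N * b)) (2 * C / (b - 2 * β))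
  have hK0 : 0 ≤ K := le_max_of_le_left (div_nonneg (hv N) (hN N le_rfl).2.1.le)
  have hKC : 2 * C ≤ K * (b - 2 * β) := (div_le_iff₀ hγ).1 (le_max_right _ _)
  have linear_bound : ∀ n ≥ N, v n ≤ K * (w + n * b) := by
    intro n hn
    induction n, hn using Nat.le_induction with
    | base => exact (div_le_iff₀ (hN N le_rfl).2.1).1 (le_max_left _ _)
    | succ n hn ih =>
      obtain ⟨step, t_pos, t_large⟩ := hN n hn
      rw [div_le_iff₀ hγ] at t_large
      set t := w + n * b with ht
      have quadratic : 2 * (K * (t⁻¹ * β ^ 2)) ≤ K * (b - 2 * β) := by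
        rw [mul_left_comm]
        refine mul_le_mul_of_nonneg_left ?_ hK0
        rw [mul_left_comm, inv_mul_le_iff₀ t_pos]
        linarith
      calc v (n + 1) ≤ (1 + t⁻¹ * β) ^ 2 * (K * t) + C := step.trans (by gcongr)
        _ = K * (t + 2 * β) + K * (t⁻¹ * β ^ 2) + C := by
          field_simp
          ring
        _ ≤ K * (t + b) := by linarith
        _ = K * (w + (n + 1 : ℕ) * b) := by
          rw [ht]
          push_cast
          ring
  refine .of_bound (K * (|w| + b)) ?_
  filter_upwards [eventually_ge_atTop N, eventually_ge_atTop 1] with n hn hn1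
  rw [Real.norm_of_nonneg (hv n), Real.norm_natCast]
  refine (linear_bound n hn).trans ?_
  have hn1 : (1 : ℝ) ≤ n := mod_cast hn1
  have : w ≤ |w| * n := (le_abs_self w).trans (le_mul_of_one_le_right (abs_nonneg w) hn1)
  nlinarith

variable {Ω E : Type*} {m0 : MeasurableSpace Ω} {μ : Measure Ω} [IsFiniteMeasure μ]
  [NormedAddCommGroup E] [InnerProductSpace ℝ E] [CompleteSpace E]

theorem isBigO_lpNorm_sq_of_norm_condExp_le {ℱ : Filtration ℕ m0} {V : ℕ → Ω → E} {k : ℕ}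
    {w b β M : ℝ} (hb : 0 < b) (hβ0 : 0 ≤ β) (hβ : 2 * β < b) (hV : StronglyAdapted ℱ V)
    (hVp : ∀ n, MemLp (V n) (2 * (k + 1) : ℕ) μ)
    (hM : ∀ n, lpNorm (V (n + 1) - V n) (2 * (k + 1) : ℕ) μ ≤ M)
    (hcond : ∀ᶠ n : ℕ in atTop, ∀ᵐ ω ∂μ,
      ‖(μ[V (n + 1) | ℱ n]) ω‖ ≤ (1 + (w + n * b)⁻¹ * β) * ‖V n ω‖) :
    (fun n => lpNorm (V n) (2 * (k + 1) : ℕ) μ ^ 2) =O[atTop] fun n => (n : ℝ) := by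
  refine isBigO_natCast_of_le_one_add_inv_mul_sq_mul_add (w := w)
    (C := 16 * (k + 1) ^ 2 * 2 ^ k * M ^ 2) hb hβ (fun n => sq_nonneg _) ?_
  filter_upwards [hcond,
    (tendsto_add_natCast_mul_atTop w hb).eventually_ge_atTop 0] with n hn t_nonneg
  have drift := lpNorm_le_mul_lpNorm_of_ae_le_mul (by positivity)
    ((hVp (n + 1)).condExp (mod_cast (by omega))).1 (hVp n) hn
  refine (lpNorm_sq_le_lpNorm_condExp_sq_add (ℱ.le n) k (hVp (n + 1)) (hVp n) (hV n)).trans ?_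
  rw [← mul_pow]
  gcongr
  · exact lpNorm_nonneg
  · exact lpNorm_nonneg
  · exact hM n

end Growth

section LinearDrift

variable {Ω : Type*} {m m0 : MeasurableSpace Ω} {μ : Measure Ω} {E : Type*} [NormedAddCommGroup E]
  {w b : ℝ}

section Embedding

variable [IsFiniteMeasure μ] [NormedSpace ℝ E] [CompleteSpace E]

theorem isBigO_lpNorm_sq_of_condExp_eq_add_smul {F : Type*} [NormedAddCommGroup F]
    [InnerProductSpace ℝ F] [CompleteSpace F] {ℱ : Filtration ℕ m0} {Y : ℕ → Ω → E} {k : ℕ}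
    {M δ β : ℝ} {L : E →L[ℝ] E} {J : E →L[ℝ] F} (hb : 0 < b) (hδ : 0 < δ) (hβ0 : 0 ≤ β)
    (hβ : 2 * β < b) (hJ : ∀ x, ‖x‖ ≤ ‖J x‖)
    (hJL : ∀ s, 0 ≤ s → s ≤ δ → ∀ x, ‖J (x + s • L x)‖ ≤ (1 + s * β) * ‖J x‖)
    (hY : StronglyAdapted ℱ Y) (hYp : ∀ n, MemLp (Y n) (2 * (k + 1) : ℕ) μ)
    (hM : ∀ n, lpNorm (Y (n + 1) - Y n) (2 * (k + 1) : ℕ) μ ≤ M)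
    (hcond : ∀ n : ℕ, μ[Y (n + 1) | ℱ n] =ᵐ[μ] fun ω => Y n ω + (w + n * b)⁻¹ • L (Y n ω)) :
    (fun n => lpNorm (Y n) (2 * (k + 1) : ℕ) μ ^ 2) =O[atTop] fun n => (n : ℝ) := by
  have hJp (n : ℕ) : MemLp (J ∘ Y n) (2 * (k + 1) : ℕ) μ := (hYp n).continuousLinearMap_comp J
  have increments (n : ℕ) :
      lpNorm (J ∘ Y (n + 1) - J ∘ Y n) (2 * (k + 1) : ℕ) μ ≤ ‖J‖ * M :=
    (lpNorm_le_mul_lpNorm_of_ae_le_mul (norm_nonneg J) ((hJp _).sub (hJp n)).1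
      ((hYp _).sub (hYp n)) (.of_forall fun ω => by
        simpa using J.le_opNorm (Y (n + 1) ω - Y n ω))).trans
      (mul_le_mul_of_nonneg_left (hM n) (norm_nonneg J))
  have drift : ∀ᶠ n : ℕ in atTop, ∀ᵐ ω ∂μ,
      ‖(μ[J ∘ Y (n + 1) | ℱ n]) ω‖ ≤ (1 + (w + n * b)⁻¹ * β) * ‖(J ∘ Y n) ω‖ := by
    filter_upwards [(tendsto_add_natCast_mul_atTop w hb).eventually_ge_atTop δ⁻¹] with n hn
    have hJcond := J.comp_condExp_comm (m := ℱ n)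
      ((hYp (n + 1)).integrable (mod_cast (by omega)))
    filter_upwards [hJcond, hcond n] with ω hJω hω
    rw [← hJω, Function.comp_apply, hω]
    exact hJL _ (inv_nonneg.2 ((inv_nonneg.2 hδ.le).trans hn))
      (inv_le_of_inv_le₀ hδ hn) _
  refine .trans (.of_norm_le fun n => ?_) <| isBigO_lpNorm_sq_of_norm_condExp_le hb hβ0 hβ
    (fun n => J.continuous.comp_stronglyMeasurable (hY n)) hJp increments drift
  rw [norm_pow, Real.norm_of_nonneg lpNorm_nonneg]
  refine pow_le_pow_left₀ lpNorm_nonneg ?_ 2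
  refine le_of_le_of_eq ?_ (one_mul _)
  exact lpNorm_le_mul_lpNorm_of_ae_le_mul zero_le_one (hYp n).1 (hJp n)
    (.of_forall fun ω => by simpa using hJ (Y n ω))

end Embedding

section Centring

variable [IsProbabilityMeasure μ] [NormedSpace ℝ E] [CompleteSpace E]

theorem condExp_sub_integral_eq_add_smul (hm : m ≤ m0) {f g : Ω → E}
    {L : E →L[ℝ] E} {s : ℝ} (hf : Integrable f μ) (hfm : StronglyMeasurable[m] f)
    (hg : Integrable g μ) (h : μ[g - f | m] =ᵐ[μ] fun ω => s • L (f ω)) :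
    μ[fun ω => g ω - ∫ ω', g ω' ∂μ | m] =ᵐ[μ] fun ω =>
      (f ω - ∫ ω', f ω' ∂μ) + s • L (f ω - ∫ ω', f ω' ∂μ) := by
  have mean : ∫ ω, g ω ∂μ = ∫ ω, f ω ∂μ + s • L (∫ ω, f ω ∂μ) := by
    rw [← L.integral_comp_comm hf, ← integral_smul, ← integral_congr_ae h, integral_condExp hm,
      ← integral_add hf (hg.sub hf)]
    simp
  filter_upwards [condExp_sub hg (integrable_const (∫ ω, g ω ∂μ)) m, condExp_sub hg hf m, h]
    with ω h_centred h_diff h_drift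
  rw [Pi.sub_apply, condExp_of_stronglyMeasurable hm hfm hf, h_drift, eq_sub_iff_add_eq] at h_diff
  refine h_centred.trans ?_
  rw [condExp_const hm, Pi.sub_apply, ← h_diff, mean, map_sub, smul_sub]
  abel

theorem lpNorm_sub_integral_sub_le {f g : Ω → E} {p : ENNReal} (hp : 1 ≤ p) (hf : MemLp f p μ)
    (hg : MemLp g p μ) :
    lpNorm ((fun ω => g ω - ∫ ω', g ω' ∂μ) - fun ω => f ω - ∫ ω', f ω' ∂μ) p μ ≤
      2 * lpNorm (g - f) p μ := by
  have h := lpNorm_sub_condExp_le (m := ⊥) bot_le hp (hg.sub hf) MemLp.zero'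
    stronglyMeasurable_zero
  rw [condExp_bot, show g - f - (fun _ => 0) = g - f from sub_zero _] at h
  convert h using 2
  ext ω
  simp only [Pi.sub_apply, integral_sub (hg.integrable hp) (hf.integrable hp)]
  abel

end Centring

section UrnProcess

variable {ι : Type*} [Fintype ι]

theorem ae_dotProduct_sub_integral_eq_zero [IsProbabilityMeasure μ] {a : ι → ℝ} {c : ℝ}
    {f : Ω → EuclideanSpace ℝ ι} (hf : Integrable f μ) (h : ∀ᵐ ω ∂μ, a ⬝ᵥ f ω = c) :
    ∀ᵐ ω ∂μ, a ⬝ᵥ (f ω - ∫ ω', f ω' ∂μ).ofLp = 0 := by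
  have mean : ⟪WithLp.toLp 2 a, ∫ ω, f ω ∂μ⟫_ℝ = c := by
    rw [← integral_inner hf, integral_congr_ae (g := fun _ => c)]
    · simp
    · filter_upwards [h] with ω hω
      rw [EuclideanSpace.inner_eq_star_dotProduct, star_trivial, dotProduct_comm, hω]
  rw [EuclideanSpace.inner_eq_star_dotProduct, star_trivial, dotProduct_comm] at mean
  filter_upwards [h] with ω hω
  rw [WithLp.ofLp_sub, dotProduct_sub, hω, mean, sub_self]

variable [DecidableEq ι]

theorem toEuclideanCLM_sub_vecMulVec_of_dotProduct_eq_zero (A : Matrix ι ι ℝ) {a : ι → ℝ}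
    (v : ι → ℝ) {y : EuclideanSpace ℝ ι} (hy : a ⬝ᵥ y = 0) :
    toEuclideanCLM (𝕜 := ℝ) (A - vecMulVec v a) y = toEuclideanCLM (𝕜 := ℝ) A y := by
  ext i
  simp [vecMulVec_mulVec, hy]

theorem isBigO_lpNorm_sub_integral_sq [Nonempty ι] [IsProbabilityMeasure μ] {ℱ : Filtration ℕ m0}
    {X : ℕ → Ω → EuclideanSpace ℝ ι} {A : Matrix ι ι ℝ} {a v : ι → ℝ} {k : ℕ} {M : ℝ} (hb : 0 < b)
    (hB : ∀ z ∈ spectrum ℂ ((A - vecMulVec v a).map ((↑) : ℝ → ℂ)), z.re < b / 2)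
    (hX : StronglyAdapted ℱ X) (hXp : ∀ n, MemLp (X n) (2 * (k + 1) : ℕ) μ)
    (hM : ∀ n, lpNorm (X (n + 1) - X n) (2 * (k + 1) : ℕ) μ ≤ M)
    (haX : ∀ n : ℕ, ∀ᵐ ω ∂μ, a ⬝ᵥ X n ω = w + n * b)
    (hcond : ∀ n : ℕ, μ[X (n + 1) - X n | ℱ n] =ᵐ[μ]
      fun ω => (w + n * b)⁻¹ • toEuclideanCLM (𝕜 := ℝ) A (X n ω)) :
    (fun n => lpNorm (fun ω => X n ω - ∫ ω', X n ω' ∂μ) (2 * (k + 1) : ℕ) μ ^ 2) =O[atTop]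
      fun n => (n : ℝ) := by
  obtain ⟨δ, hδ, β, hβ0, hβ, N, J, hJ, hJB⟩ :=
    exists_embedding_norm_add_smul_toEuclideanCLM_le _ (half_pos hb) hB
  have hp : 1 ≤ ((2 * (k + 1) : ℕ) : ENNReal) := mod_cast (by omega)
  have hXint (n : ℕ) : Integrable (X n) μ := (hXp n).integrable hp
  refine isBigO_lpNorm_sq_of_condExp_eq_add_smul (w := w) (M := 2 * M) hb hδ hβ0 (by linarith)
    hJ hJB (fun n => (hX n).sub stronglyMeasurable_const)
    (fun n => (hXp n).sub (memLp_const _)) (fun n => ?_) (fun n => ?_)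
  · exact (lpNorm_sub_integral_sub_le hp (hXp n) (hXp (n + 1))).trans (by gcongr; exact hM n)
  · refine (condExp_sub_integral_eq_add_smul (ℱ.le n) (hXint n) (hX n) (hXint (n + 1))
      (hcond n)).trans ?_
    filter_upwards [ae_dotProduct_sub_integral_eq_zero (hXint n) (haX n)] with ω hω
    rw [toEuclideanCLM_sub_vecMulVec_of_dotProduct_eq_zero A v hω]

end UrnProcess

end LinearDrift

section SecondEigenvalue

theorem re_lt_half_of_mem_spectrum_sub_vecMulVec {q : ℕ} {A : Matrix (Fin q) (Fin q) ℝ}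
    {a v : Fin q → ℝ} {b : ℝ} (hb : 0 < b) (hA : a ᵥ* A = b • a) (hav : a ⬝ᵥ v = b)
    (hsmall : ∀ z : ℂ, MemSecondEigSet (A.map ((↑) : ℝ → ℂ)) b z → z.re < b / 2) {z : ℂ}
    (hz : z ∈ spectrum ℂ ((A - vecMulVec v a).map ((↑) : ℝ → ℂ))) : z.re < b / 2 := by
  have hmap : (A - vecMulVec v a).map ((↑) : ℝ → ℂ) =
      A.map ((↑) : ℝ → ℂ) - vecMulVec (fun i => (v i : ℂ)) fun i => (a i : ℂ) := by
    ext i j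
    simp [vecMulVec_apply]
  rw [hmap] at hz
  have hA' : (fun i => (a i : ℂ)) ᵥ* A.map ((↑) : ℝ → ℂ) = (b : ℂ) • fun i => (a i : ℂ) := by
    ext j
    simpa [vecMul, dotProduct] using congrArg ((↑) : ℝ → ℂ) (congrFun hA j)
  have hav' : (fun i => (a i : ℂ)) ⬝ᵥ (fun i => (v i : ℂ)) = b := by
    simpa [dotProduct] using congrArg ((↑) : ℝ → ℂ) hav
  obtain rfl | hz := eq_zero_or_mem_spectrum_or_two_le_rootMultiplicity
    (mod_cast hb.ne') hA' hav' hz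
  · simpa using hb
  · exact hsmall z hz

end SecondEigenvalue

section IncrementBounds

variable {Ω E : Type*} {m0 : MeasurableSpace Ω} {μ : Measure Ω} [NormedAddCommGroup E]
  {X : ℕ → Ω → E} {p : ENNReal}

theorem memLp_of_iSup_eLpNorm_sub_lt_top (h0 : MemLp (X 0) p μ)
    (hX : ∀ n, AEStronglyMeasurable (X (n + 1) - X n) μ)
    (h : ⨆ n, eLpNorm (X (n + 1) - X n) p μ < ⊤) (n : ℕ) : MemLp (X n) p μ := by
  have increment (n : ℕ) : MemLp (X (n + 1) - X n) p μ :=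
    ⟨hX n, (le_iSup (fun n => eLpNorm (X (n + 1) - X n) p μ) n).trans_lt h⟩
  induction n with
  | zero => exact h0
  | succ n ih => simpa using ih.add (increment n)

theorem lpNorm_le_toReal_iSup_eLpNorm {ι : Type*} {f : ι → Ω → E}
    (hf : ∀ i, AEStronglyMeasurable (f i) μ) (h : ⨆ i, eLpNorm (f i) p μ < ⊤) (i : ι) :
    lpNorm (f i) p μ ≤ (⨆ i, eLpNorm (f i) p μ).toReal := by
  rw [← toReal_eLpNorm (hf i)]
  exact ENNReal.toReal_mono h.ne (le_iSup (fun i => eLpNorm (f i) p μ) i)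

variable [NormedSpace ℝ E]

theorem exists_eventually_lpNorm_inv_sqrt_smul_le {Y : ℕ → Ω → E}
    (h : (fun n => lpNorm (Y n) p μ ^ 2) =O[atTop] fun n => (n : ℝ)) :
    ∃ C, ∀ᶠ n : ℕ in atTop, lpNorm (fun ω => (1 / √n) • Y n ω) p μ ≤ C := by
  obtain ⟨C, hC⟩ := h.bound
  refine ⟨√C, ?_⟩
  filter_upwards [hC, eventually_gt_atTop 0] with n hn n_pos
  have n_pos : (0 : ℝ) < n := mod_cast n_pos
  rw [Real.norm_of_nonneg (sq_nonneg _), Real.norm_of_nonneg n_pos.le] at hn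
  refine Real.le_sqrt_of_sq_le ?_
  have scale : lpNorm (fun ω => (1 / √n) • Y n ω) p μ = 1 / √n * lpNorm (Y n) p μ :=
    (lpNorm_const_smul _ (Y n) μ).trans (by simp)
  rwa [scale, mul_pow, div_pow, one_pow, Real.sq_sqrt n_pos.le, one_div, inv_mul_le_iff₀ n_pos,
    mul_comm]

end IncrementBounds

section WeakConvergence

variable {E : Type*} [TopologicalSpace E]

theorem abs_sub_max_neg_min_le {M : ℝ} (hM : 0 < M) (y : ℝ) :
    |y - max (-M) (min y M)| ≤ y ^ 2 / M := by
  rw [le_div_iff₀ hM]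
  rcases le_total y M with hy | hy
  · rcases le_total (-M) y with hy' | hy'
    · rw [min_eq_left hy, max_eq_right hy', sub_self, abs_zero, zero_mul]
      positivity
    · rw [min_eq_left hy, max_eq_left hy', abs_of_nonpos (by linarith)]
      nlinarith
  · rw [min_eq_right hy, max_eq_right (by linarith), abs_of_nonneg (by linarith)]
    nlinarith

/-- The truncation of a continuous real function to `[-M, M]`, as a test function for weak
convergence. -/
noncomputable def truncate (f : C(E, ℝ)) (M : ℝ) : BoundedContinuousFunction E ℝ :=
  .ofNormedAddCommGroup (fun x => max (-M) (min (f x) M)) (by fun_prop) |M| fun x =>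
    abs_le.2 ⟨(neg_le_neg (le_abs_self M)).trans (le_max_left _ _),
      max_le (neg_le_abs M) ((min_le_right _ _).trans (le_abs_self M))⟩

theorem abs_sub_truncate_le (f : C(E, ℝ)) {M : ℝ} (hM : 0 < M) (x : E) :
    |f x - truncate f M x| ≤ f x ^ 2 / M :=
  abs_sub_max_neg_min_le hM (f x)

variable [MeasurableSpace E] [OpensMeasurableSpace E]

theorem abs_integral_sub_integral_truncate_le {ρ : Measure E} [IsFiniteMeasure ρ] {f : C(E, ℝ)}
    (hf : MemLp f 2 ρ) {M : ℝ} (hM : 0 < M) :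
    |∫ x, f x ∂ρ - ∫ x, truncate f M x ∂ρ| ≤ (∫ x, f x ^ 2 ∂ρ) / M := by
  rw [← integral_sub (hf.integrable one_le_two) ((truncate f M).integrable ρ), ← integral_div]
  exact abs_integral_le_integral_abs.trans <|
    integral_mono_of_nonneg (ae_of_all _ fun _ => abs_nonneg _) (hf.integrable_sq.div_const M)
      (ae_of_all _ (abs_sub_truncate_le f hM))

variable [HasOuterApproxClosed E] {ρs : ℕ → ProbabilityMeasure E} {ρ : ProbabilityMeasure E}

theorem lintegral_ofReal_le_of_tendsto (hρ : Tendsto ρs atTop (nhds ρ)) {g : E → ℝ}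
    (hg : Continuous g) (hg0 : 0 ≤ g) {K : ENNReal}
    (hK : ∀ᶠ n in atTop, ∫⁻ x, ENNReal.ofReal (g x) ∂(ρs n : Measure E) ≤ K) :
    ∫⁻ x, ENNReal.ofReal (g x) ∂(ρ : Measure E) ≤ K :=
  (lintegral_le_liminf_lintegral_of_forall_isOpen_measure_le_liminf_measure hg hg0 fun _ hG =>
    ProbabilityMeasure.le_liminf_measure_open_of_tendsto hρ hG).trans
      (liminf_le_of_frequently_le' hK.frequently)

theorem memLp_two_and_integral_sq_le_of_tendsto (hρ : Tendsto ρs atTop (nhds ρ)) {f : C(E, ℝ)}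
    (hf : ∀ n, MemLp f 2 (ρs n : Measure E)) {K : ℝ}
    (hK : ∀ᶠ n in atTop, ∫ x, f x ^ 2 ∂(ρs n : Measure E) ≤ K) :
    MemLp f 2 (ρ : Measure E) ∧ ∫ x, f x ^ 2 ∂(ρ : Measure E) ≤ K := by
  have lintegral_le : ∫⁻ x, ENNReal.ofReal (f x ^ 2) ∂(ρ : Measure E) ≤ ENNReal.ofReal K := by
    refine lintegral_ofReal_le_of_tendsto hρ (by fun_prop) (fun x => sq_nonneg (f x)) ?_
    filter_upwards [hK] with n hn
    rw [← ofReal_integral_eq_lintegral_ofReal (hf n).integrable_sq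
      (ae_of_all _ fun x => sq_nonneg (f x))]
    exact ENNReal.ofReal_le_ofReal hn
  have K_nonneg : 0 ≤ K :=
    let ⟨n, hn⟩ := hK.exists
    (integral_nonneg fun x => sq_nonneg (f x)).trans hn
  have integrable : Integrable (fun x => f x ^ 2) (ρ : Measure E) :=
    (lintegral_ofReal_ne_top_iff_integrable (by fun_prop) (ae_of_all _ fun x => sq_nonneg (f x))).1
      (lintegral_le.trans_lt ENNReal.ofReal_lt_top).ne
  refine ⟨(memLp_two_iff_integrable_sq f.continuous.aestronglyMeasurable).2 integrable, ?_⟩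
  rwa [← ENNReal.ofReal_le_ofReal_iff K_nonneg,
    ofReal_integral_eq_lintegral_ofReal integrable (ae_of_all _ fun x => sq_nonneg (f x))]

theorem tendsto_integral_of_integral_sq_le (hρ : Tendsto ρs atTop (nhds ρ)) {f : C(E, ℝ)}
    (hf : ∀ n, MemLp f 2 (ρs n : Measure E)) {K : ℝ}
    (hK : ∀ᶠ n in atTop, ∫ x, f x ^ 2 ∂(ρs n : Measure E) ≤ K) :
    Tendsto (fun n => ∫ x, f x ∂(ρs n : Measure E)) atTop (nhds (∫ x, f x ∂(ρ : Measure E))) := by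
  obtain ⟨hfρ, hKρ⟩ := memLp_two_and_integral_sq_le_of_tendsto hρ hf hK
  refine Metric.tendsto_nhds.2 fun ε hε => ?_
  obtain ⟨M, hM, hMε⟩ : ∃ M > 0, K / M < ε / 3 :=
    (((tendsto_const_nhds.div_atTop tendsto_id).eventually_lt_const (by linarith)).and
      (eventually_gt_atTop (0 : ℝ))).exists.imp fun M h => ⟨h.2, h.1⟩
  have truncate_close {ρ' : Measure E} [IsProbabilityMeasure ρ'] (hf' : MemLp f 2 ρ')
      (hK' : ∫ x, f x ^ 2 ∂ρ' ≤ K) : |∫ x, f x ∂ρ' - ∫ x, truncate f M x ∂ρ'| < ε / 3 :=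
    (abs_integral_sub_integral_truncate_le hf' hM).trans_lt
      ((div_le_div_of_nonneg_right hK' hM.le).trans_lt hMε)
  have truncate_tendsto := Metric.tendsto_nhds.1
    (ProbabilityMeasure.tendsto_iff_forall_integral_tendsto.1 hρ (truncate f M)) (ε / 3)
    (by positivity)
  filter_upwards [hK, truncate_tendsto] with n hn hdist
  have hclose := abs_lt.1 (truncate_close (hf n) hn)
  have hcloseρ := abs_lt.1 (truncate_close hfρ hKρ)
  rw [Real.dist_eq, abs_lt] at hdist ⊢
  constructor <;> linarith [hclose.1, hclose.2, hcloseρ.1, hcloseρ.2, hdist.1, hdist.2]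

end WeakConvergence

section PolynomialGrowth

variable {Ω E : Type*} [NormedAddCommGroup E] {m0 : MeasurableSpace Ω} {μ : Measure Ω}
  [IsProbabilityMeasure μ]

theorem lpNorm_one_add_norm_le {Y : Ω → E} {p : ENNReal} (hp : 1 ≤ p) (hY : MemLp Y p μ) :
    lpNorm (fun ω => 1 + ‖Y ω‖) p μ ≤ 1 + lpNorm Y p μ :=
  calc lpNorm (fun ω => 1 + ‖Y ω‖) p μ ≤ lpNorm (fun _ => (1 : ℝ)) p μ + lpNorm (‖Y ·‖) p μ :=
        lpNorm_add_le (memLp_const 1) hp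
    _ = 1 + lpNorm Y p μ := by
        rw [lpNorm_const (by positivity) (NeZero.ne μ), lpNorm_norm hY.1, probReal_univ,
          Real.one_rpow, norm_one, mul_one]

theorem memLp_two_and_integral_sq_le_of_abs_le_one_add_norm_pow {Y : Ω → E} {g : Ω → ℝ} {k : ℕ}
    (hg : AEStronglyMeasurable g μ) (hgY : ∀ ω, |g ω| ≤ (1 + ‖Y ω‖) ^ k)
    (hY : MemLp Y (2 * (k + 1) : ℕ) μ) :
    MemLp g 2 μ ∧ ∫ ω, g ω ^ 2 ∂μ ≤ (1 + lpNorm Y (2 * (k + 1) : ℕ) μ) ^ (2 * (k + 1)) := by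
  have memLp_one_add : MemLp (fun ω => 1 + ‖Y ω‖) (2 * (k + 1) : ℕ) μ :=
    MemLp.add (memLp_const (1 : ℝ)) hY.norm
  have integrable_pow := memLp_one_add.integrable_norm_pow (by lia)
  have sq_le (ω : Ω) : g ω ^ 2 ≤ ‖1 + ‖Y ω‖‖ ^ (2 * (k + 1)) :=
    calc g ω ^ 2 = |g ω| ^ 2 := (sq_abs _).symm
      _ ≤ ((1 + ‖Y ω‖) ^ k) ^ 2 := by gcongr; exact hgY ω
      _ = (1 + ‖Y ω‖) ^ (2 * k) := by ring
      _ ≤ (1 + ‖Y ω‖) ^ (2 * (k + 1)) :=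
        pow_le_pow_right₀ (le_add_of_nonneg_right (norm_nonneg _)) (by lia)
      _ = ‖1 + ‖Y ω‖‖ ^ (2 * (k + 1)) := by rw [Real.norm_of_nonneg (by positivity)]
  refine ⟨(memLp_two_iff_integrable_sq hg).2 (integrable_pow.mono' (hg.pow 2)
    (ae_of_all _ fun ω => (Real.norm_of_nonneg (sq_nonneg _)).trans_le (sq_le ω))), ?_⟩
  calc ∫ ω, g ω ^ 2 ∂μ ≤ ∫ ω, ‖1 + ‖Y ω‖‖ ^ (2 * (k + 1)) ∂μ :=
        integral_mono_of_nonneg (ae_of_all _ fun _ => sq_nonneg _) integrable_pow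
          (ae_of_all _ sq_le)
    _ = lpNorm (fun ω => 1 + ‖Y ω‖) (2 * (k + 1) : ℕ) μ ^ (2 * (k + 1)) :=
        (lpNorm_natCast_pow (by lia) memLp_one_add.1).symm
    _ ≤ (1 + lpNorm Y (2 * (k + 1) : ℕ) μ) ^ (2 * (k + 1)) := by
        gcongr
        · exact lpNorm_nonneg
        · exact lpNorm_one_add_norm_le (by exact_mod_cast (by lia : 1 ≤ 2 * (k + 1))) hY

theorem tendsto_integral_comp_of_abs_le_one_add_norm_pow [MeasurableSpace E] [BorelSpace E]
    {ν : Measure E} [IsProbabilityMeasure ν] {Z : ℕ → Ω → E}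
    (hconv : ∀ f : BoundedContinuousFunction E ℝ,
      Tendsto (fun n => ∫ ω, f (Z n ω) ∂μ) atTop (nhds (∫ x, f x ∂ν)))
    {f : C(E, ℝ)} {k : ℕ} (hf : ∀ x, |f x| ≤ (1 + ‖x‖) ^ k)
    (hZ : ∀ n, MemLp (Z n) (2 * (k + 1) : ℕ) μ) {K : ℝ}
    (hK : ∀ᶠ n in atTop, lpNorm (Z n) (2 * (k + 1) : ℕ) μ ≤ K) :
    Tendsto (fun n => ∫ ω, f (Z n ω) ∂μ) atTop (nhds (∫ x, f x ∂ν)) := by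
  have aemeasurable (n : ℕ) : AEMeasurable (Z n) μ := (hZ n).1.aemeasurable
  have integral_law (g : C(E, ℝ)) (n : ℕ) : ∫ x, g x ∂(μ.map (Z n)) = ∫ ω, g (Z n ω) ∂μ :=
    integral_map (aemeasurable n) g.continuous.aestronglyMeasurable
  have sq_bound (n : ℕ) := memLp_two_and_integral_sq_le_of_abs_le_one_add_norm_pow
    (f.continuous.comp_aestronglyMeasurable (hZ n).1) (fun ω => hf (Z n ω)) (hZ n)
  let law (n : ℕ) : ProbabilityMeasure E :=
    ⟨μ.map (Z n), Measure.isProbabilityMeasure_map (aemeasurable n)⟩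
  have tendsto_law : Tendsto law atTop (nhds ⟨ν, inferInstance⟩) := by
    refine ProbabilityMeasure.tendsto_iff_forall_integral_tendsto.2 fun g => ?_
    exact (hconv g).congr fun n => (integral_law g n).symm
  refine (tendsto_integral_of_integral_sq_le (K := (1 + K) ^ (2 * (k + 1))) tendsto_law
    (fun n => (memLp_map_measure_iff f.continuous.aestronglyMeasurable (aemeasurable n)).2
      (sq_bound n).1) (hK.mono fun n hn => ?_)).congr (integral_law f)
  calc ∫ x, f x ^ 2 ∂(law n : Measure E) = ∫ ω, f (Z n ω) ^ 2 ∂μ :=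
        integral_map (aemeasurable n) (by fun_prop)
    _ ≤ (1 + lpNorm (Z n) (2 * (k + 1) : ℕ) μ) ^ (2 * (k + 1)) := (sq_bound n).2
    _ ≤ (1 + K) ^ (2 * (k + 1)) := by gcongr; exact add_nonneg zero_le_one lpNorm_nonneg

end PolynomialGrowth

section GaussianCovariance

variable {ι : Type*} [Fintype ι] [DecidableEq ι] {S : Matrix ι ι ℝ}

theorem eq_multivariateGaussian_zero_of_map_dotProduct (hS : S.PosSemidef)
    {ν : Measure (EuclideanSpace ℝ ι)} [IsFiniteMeasure ν]
    (hν : ∀ l : ι → ℝ, ν.map (fun x => ∑ j, l j * x j) =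
      gaussianReal 0 (∑ i, ∑ j, l i * S i j * l j).toNNReal) :
    ν = multivariateGaussian 0 S := by
  refine Measure.ext_of_charFun (funext fun t => ?_)
  have charFun_eq : charFun ν t = charFun (ν.map fun x => ∑ j, t j * x j) 1 := by
    rw [charFun_apply_real, integral_map (by fun_prop) (by fun_prop), charFun_apply]
    simp [PiLp.inner_apply]
  have quadForm_eq : ∑ i, ∑ j, t i * S i j * t j = t ⬝ᵥ S *ᵥ t := by
    simp only [dotProduct, mulVec, Finset.mul_sum, mul_assoc]
  have quadForm_nonneg : 0 ≤ t ⬝ᵥ S *ᵥ t := by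
    simpa using hS.dotProduct_mulVec_nonneg t
  rw [charFun_eq, hν, charFun_gaussianReal, charFun_multivariateGaussian hS, quadForm_eq,
    Real.coe_toNNReal _ quadForm_nonneg]
  simp only [inner_zero_right, Complex.ofReal_zero, Complex.ofReal_one, one_pow, mul_one, mul_zero,
    zero_mul]

theorem integral_apply_mul_apply_multivariateGaussian_zero (hS : S.PosSemidef) (i j : ι) :
    ∫ x, x i * x j ∂(multivariateGaussian 0 S) = S i j := by
  have memLp (i : ι) : MemLp (fun x => x i) 2 (multivariateGaussian 0 S) :=
    IsGaussian.memLp_dual _ (EuclideanSpace.proj i) 2 ENNReal.ofNat_ne_top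
  have integral_eq_zero (i : ι) : ∫ x, x i ∂(multivariateGaussian 0 S) = 0 := by
    simpa using IsGaussian.integral_dual (μ := multivariateGaussian 0 S) (EuclideanSpace.proj i)
  have h := covariance_eval_multivariateGaussian (μ := 0) hS i j
  rwa [covariance_eq_sub (memLp i) (memLp j), integral_eq_zero i, zero_mul, sub_zero] at h

end GaussianCovariance

section MomentFunctions

theorem integral_inv_sqrt_smul_apply_mul_apply {Ω ι : Type*} {m0 : MeasurableSpace Ω}
    (μ : Measure Ω) (Y : Ω → EuclideanSpace ℝ ι) (n : ℕ) (i j : ι) :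
    ∫ ω, ((1 / √n) • Y ω) i * ((1 / √n) • Y ω) j ∂μ = (∫ ω, Y ω i * Y ω j ∂μ) / n := by
  have inv_sqrt_sq : 1 / √n * (1 / √n) = (n : ℝ)⁻¹ := by
    rw [div_mul_div_comm, Real.mul_self_sqrt n.cast_nonneg, one_mul, one_div]
  simp only [PiLp.smul_apply, smul_eq_mul, mul_mul_mul_comm (1 / √n), inv_sqrt_sq,
    integral_const_mul]
  exact inv_mul_eq_div _ _

variable {ι : Type*} [Fintype ι]

theorem abs_norm_rpow_le_one_add_norm_pow {E : Type*} [NormedAddCommGroup E] {r : ℝ} (hr : 0 ≤ r)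
    (x : E) : |‖x‖ ^ r| ≤ (1 + ‖x‖) ^ ⌈r⌉₊ :=
  calc |‖x‖ ^ r| = ‖x‖ ^ r := abs_of_nonneg (by positivity)
    _ ≤ (1 + ‖x‖) ^ r := by gcongr; exact le_add_of_nonneg_left zero_le_one
    _ ≤ (1 + ‖x‖) ^ (⌈r⌉₊ : ℝ) :=
      Real.rpow_le_rpow_of_exponent_le (le_add_of_nonneg_right (norm_nonneg x)) (Nat.le_ceil r)
    _ = (1 + ‖x‖) ^ ⌈r⌉₊ := Real.rpow_natCast _ _

theorem abs_prod_pow_le_one_add_norm_pow (α : ι → ℕ) (x : EuclideanSpace ℝ ι) :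
    |∏ j, x j ^ α j| ≤ (1 + ‖x‖) ^ ∑ j, α j :=
  calc |∏ j, x j ^ α j| = ∏ j, |x j| ^ α j := by simp only [Finset.abs_prod, abs_pow]
    _ ≤ ∏ j, (1 + ‖x‖) ^ α j := by
      gcongr with j
      exact (PiLp.norm_apply_le x j).trans (le_add_of_nonneg_left zero_le_one)
    _ = (1 + ‖x‖) ^ ∑ j, α j := Finset.prod_pow_eq_pow_sum _ _ _

theorem abs_apply_mul_apply_le_one_add_norm_sq (i j : ι) (x : EuclideanSpace ℝ ι) :
    |x i * x j| ≤ (1 + ‖x‖) ^ 2 := by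
  have apply_le (i : ι) : |x i| ≤ 1 + ‖x‖ :=
    (PiLp.norm_apply_le x i).trans (le_add_of_nonneg_left zero_le_one)
  rw [abs_mul, sq]
  exact mul_le_mul (apply_le i) (apply_le j) (abs_nonneg _) (by positivity)

end MomentFunctions

theorem exists_dotProduct_eq_of_ne_zero {ι : Type*} [Fintype ι] {a : ι → ℝ} (ha : a ≠ 0) (b : ℝ) :
    ∃ v, a ⬝ᵥ v = b :=
  ⟨(b / (a ⬝ᵥ a)) • a, by
    rw [dotProduct_smul, smul_eq_mul, div_mul_cancel₀ _ (dotProduct_self_eq_zero.not.2 ha)]⟩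

theorem urn_small_clt_moment_convergence_general {q : ℕ} {Ω : Type*} {m0 : MeasurableSpace Ω}
    {μ : Measure Ω} [IsProbabilityMeasure μ] {ℱ : Filtration ℕ m0} {a : Fin q → ℝ} {b w : ℝ}
    (hb : 0 < b) (hw : 0 < w) {A : Matrix (Fin q) (Fin q) ℝ} (hA : a ᵥ* A = b • a)
    {X : ℕ → Ω → EuclideanSpace ℝ (Fin q)} (hX : StronglyAdapted ℱ X)
    (hX0 : ∀ p : ℕ, MemLp (X 0) p μ) (haX : ∀ n : ℕ, ∀ᵐ ω ∂μ, a ⬝ᵥ X n ω = w + n * b)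
    (hcond : ∀ n : ℕ, μ[X (n + 1) - X n | ℱ n] =ᵐ[μ]
      fun ω => (w + n * b)⁻¹ • toEuclideanCLM (𝕜 := ℝ) A (X n ω))
    (hmom : ∀ p : ℝ, 2 ≤ p → ⨆ n, eLpNorm (X (n + 1) - X n) (ENNReal.ofReal p) μ < ⊤)
    (hsmall : ∀ z, MemSecondEigSet (A.map ((↑) : ℝ → ℂ)) b z → z.re < b / 2)
    {ν : Measure (EuclideanSpace ℝ (Fin q))} [IsProbabilityMeasure ν]
    (hconv : ∀ f : BoundedContinuousFunction (EuclideanSpace ℝ (Fin q)) ℝ,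
      Tendsto (fun n : ℕ => ∫ ω, f ((1 / √n) • (X n ω - ∫ ω', X n ω' ∂μ)) ∂μ) atTop
        (nhds (∫ x, f x ∂ν))) :
    (∀ r : ℝ, 0 ≤ r →
      Tendsto (fun n : ℕ => ∫ ω, ‖(1 / √n) • (X n ω - ∫ ω', X n ω' ∂μ)‖ ^ r ∂μ) atTop
        (nhds (∫ x, ‖x‖ ^ r ∂ν))) ∧
    (∀ α : Fin q → ℕ,
      Tendsto (fun n : ℕ => ∫ ω, ∏ j, ((1 / √n) • (X n ω - ∫ ω', X n ω' ∂μ)) j ^ α j ∂μ) atTop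
        (nhds (∫ x : EuclideanSpace ℝ (Fin q), ∏ j, x j ^ α j ∂ν))) ∧
    (∀ i j : Fin q,
      Tendsto (fun n : ℕ =>
          (∫ ω, (X n ω i - (∫ ω', X n ω' ∂μ) i) * (X n ω j - (∫ ω', X n ω' ∂μ) j) ∂μ) / n) atTop
        (nhds (∫ x, x i * x j ∂ν))) := by
  have a_ne_zero : a ≠ 0 := by
    rintro rfl
    obtain ⟨ω, hω⟩ := (haX 0).exists
    simp [hw.ne] at hω
  have : Nonempty (Fin q) := (Function.ne_iff.1 a_ne_zero).nonempty
  obtain ⟨v, hav⟩ := exists_dotProduct_eq_of_ne_zero a_ne_zero b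
  have sup_lt_top (k : ℕ) : ⨆ n, eLpNorm (X (n + 1) - X n) (2 * (k + 1) : ℕ) μ < ⊤ := by
    simpa only [ENNReal.ofReal_natCast] using
      hmom (2 * (k + 1) : ℕ) (mod_cast (by omega : 2 ≤ 2 * (k + 1)))
  have increment_meas (n : ℕ) : AEStronglyMeasurable (X (n + 1) - X n) μ :=
    (((hX _).mono (ℱ.le _)).sub ((hX n).mono (ℱ.le n))).aestronglyMeasurable
  have memLp (k : ℕ) : ∀ n, MemLp (X n) (2 * (k + 1) : ℕ) μ :=
    memLp_of_iSup_eLpNorm_sub_lt_top (hX0 _) increment_meas (sup_lt_top k)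
  have moments_bounded (k : ℕ) := exists_eventually_lpNorm_inv_sqrt_smul_le <|
    isBigO_lpNorm_sub_integral_sq hb
      (fun _ => re_lt_half_of_mem_spectrum_sub_vecMulVec hb hA hav hsmall) hX (memLp k)
      (lpNorm_le_toReal_iSup_eLpNorm increment_meas (sup_lt_top k)) haX hcond
  have tendsto_of_growth {f : C(EuclideanSpace ℝ (Fin q), ℝ)} {k : ℕ}
      (hf : ∀ x, |f x| ≤ (1 + ‖x‖) ^ k) :=
    (moments_bounded k).elim fun _ => tendsto_integral_comp_of_abs_le_one_add_norm_pow hconv hf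
      fun n => ((memLp k n).sub (memLp_const _)).const_smul (1 / √(n : ℝ))
  refine ⟨fun r hr => ?_, fun α => ?_, fun i j => ?_⟩
  · exact tendsto_of_growth (f := ⟨fun x => ‖x‖ ^ r, by fun_prop (disch := assumption)⟩)
      (abs_norm_rpow_le_one_add_norm_pow hr)
  · exact tendsto_of_growth (f := ⟨fun x => ∏ j, x j ^ α j, by fun_prop⟩)
      (abs_prod_pow_le_one_add_norm_pow α)
  · exact (tendsto_of_growth (f := ⟨fun x => x i * x j, by fun_prop⟩)
      (abs_apply_mul_apply_le_one_add_norm_sq i j)).congr fun n =>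
        integral_inv_sqrt_smul_apply_mul_apply μ _ n i j

/-- Under the Pólya urn hypotheses, assume all moment conditions
(sup_n ‖X_{n+1} − X_n‖_p < ∞ for every p ≥ 2), that Re λ₂ < b/2 (i.e. every candidate
for the second eigenvalue λ₂ has real part < b/2, λ₁ = b being the largest eigenvalue),
and that (X_n − E X_n)/√n converges in distribution to the centered Gaussian law N(0, Σ)
on ℝ^q (characterized by: every linear image l·Z has the one-dimensional law N(0, l'Σl)).
Then the convergence holds with convergence of all moments: for every real r ≥ 1 the r-th
absolute moments converge, for every multi-index α the mixed moments converge, and in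
particular Cov(X_n)/n → Σ entrywise. -/
theorem urn_small_clt_moment_convergence
    (q : ℕ) (hq : 2 ≤ q) {Ω : Type} {m0 : MeasurableSpace Ω}
    (μ : Measure Ω) [IsProbabilityMeasure μ] (ℱ : Filtration ℕ m0)
    (a : Fin q → ℝ) (b : ℝ) (hb : 0 < b)
    (A : Matrix (Fin q) (Fin q) ℝ) (hA : Matrix.vecMul a A = b • a)
    (X : ℕ → Ω → EuclideanSpace ℝ (Fin q)) (hadp : Adapted ℱ X)
    (hXint : ∀ n, Integrable (X n) μ)
    (x₀ : EuclideanSpace ℝ (Fin q)) (hX0 : X 0 = fun _ => x₀)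
    (hw₀ : 0 < ∑ j, a j * x₀ j)
    (hwn : ∀ n : ℕ, ∀ᵐ ω ∂μ, ∑ j, a j * X n ω j = (∑ j, a j * x₀ j) + (n : ℝ) * b)
    (hcond : ∀ n : ℕ, μ[fun ω => X (n + 1) ω - X n ω | ℱ n] =ᵐ[μ]
      fun ω => ((∑ j, a j * x₀ j) + (n : ℝ) * b)⁻¹ • (Matrix.toEuclideanCLM (𝕜 := ℝ) A (X n ω)))
    (hmom : ∀ p : ℝ, 2 ≤ p →
      (⨆ n : ℕ, eLpNorm (fun ω => X (n + 1) ω - X n ω) (ENNReal.ofReal p) μ) < ⊤)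
    (hspec : (b : ℂ) ∈ spectrum ℂ (A.map (fun x : ℝ => (x : ℂ))))
    (hmax : ∀ mu ∈ spectrum ℂ (A.map (fun x : ℝ => (x : ℂ))), mu.re ≤ b)
    (hsmall : ∀ mu : ℂ, MemSecondEigSet (A.map (fun x : ℝ => (x : ℂ))) b mu → mu.re < b / 2)
    (Sig : Matrix (Fin q) (Fin q) ℝ) (hSig : Sig.PosSemidef)
    (νlim : Measure (EuclideanSpace ℝ (Fin q))) (hνlim : IsProbabilityMeasure νlim)
    (hGauss : ∀ l : Fin q → ℝ,
      Measure.map (fun x : EuclideanSpace ℝ (Fin q) => ∑ j, l j * x j) νlim =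
        ProbabilityTheory.gaussianReal 0 (Real.toNNReal (∑ i, ∑ j, l i * Sig i j * l j)))
    (hconv : ∀ f : BoundedContinuousFunction (EuclideanSpace ℝ (Fin q)) ℝ,
      Tendsto (fun n : ℕ =>
          ∫ ω, f ((1 / Real.sqrt n) • (X n ω - ∫ ω', X n ω' ∂μ)) ∂μ)
        atTop (nhds (∫ x, f x ∂νlim))) :
    (∀ r : ℝ, 1 ≤ r →
      Tendsto (fun n : ℕ =>
          ∫ ω, ‖(1 / Real.sqrt n) • (X n ω - ∫ ω', X n ω' ∂μ)‖ ^ r ∂μ)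
        atTop (nhds (∫ x, ‖x‖ ^ r ∂νlim))) ∧
    (∀ α : Fin q → ℕ,
      Tendsto (fun n : ℕ =>
          ∫ ω, ∏ j, ((1 / Real.sqrt n) • (X n ω - ∫ ω', X n ω' ∂μ) : EuclideanSpace ℝ (Fin q)) j ^ α j ∂μ)
        atTop (nhds (∫ x : EuclideanSpace ℝ (Fin q), ∏ j, x j ^ α j ∂νlim))) ∧
    (∀ i j : Fin q,
      Tendsto (fun n : ℕ =>
          (∫ ω, (X n ω i - (∫ ω', X n ω' ∂μ) i) * (X n ω j - (∫ ω', X n ω' ∂μ) j) ∂μ) / (n : ℝ))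
        atTop (nhds (Sig i j))) := by
  obtain ⟨tendsto_norm, tendsto_mixed, tendsto_covariance⟩ :=
    urn_small_clt_moment_convergence_general hb hw₀ hA (fun n => (hadp n).stronglyMeasurable)
      (fun p => hX0 ▸ memLp_const x₀) hwn hcond hmom hsmall hconv
  refine ⟨fun r hr => tendsto_norm r (zero_le_one.trans hr), tendsto_mixed, fun i j => ?_⟩
  rw [← integral_apply_mul_apply_multivariateGaussian_zero hSig,
    ← eq_multivariateGaussian_zero_of_map_dotProduct hSig hGauss]
  exact tendsto_covariance i j
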